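/- arXiv:1807.07736 — 2 statements merged into one kernel-verified Lean document; each statement's English description precedes it below -/
import Mathlib

section
/- Let g_n^{(i)} (i, n ∈ ℤ) be smooth real-valued functions of (u,v,w) satisfying ∂_u g_n^{(i)} = g_{n+1}^{(i)}, ∂_v g_n^{(i)} = g_{n+2}^{(i)}, and ∂_w g_n^{(i)} = g_{n+3}^{(i)} for all i and n. For a positive integer N and an integer k, let h_N(k) = det[ g^{(i)}_{k+j−1} ]_{1≤i,j≤N} and h_0 = 1. Then the bilinear equations of the mKP hierarchy hold: (D_u² − D_v) h_{N+1}(k)·h_N(k) = 0 and (D_u³ − 4 D_w + 3 D_u D_v) h_{N+1}(k)·h_N(k) = 0. -/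
/-!
Write `τ_M` for the determinant on the columns `0, …, M - 1`, and `x_M(a, b)` for the determinant
obtained from it by replacing the column `M - 1 - b` by the column `M + a` (zero if `b ≥ M`). The
flow that shifts columns by `p` differentiates a determinant one column at a time, and almost all
of the resulting terms have a repeated column. So every derivative of `τ_M` in the two bilinear
equations is a combination of the `x_M(a, b)`: for instance
`∂_u τ = x(0,0)`, `∂_u² τ = x(1,0) - x(0,1)`, `∂_v τ = x(1,0) + x(0,1)`.

Cramer's rule for the matrix of `τ_{N+1}`, restricted to its first `N` rows and substituted into
Cramer's rule for the matrix of `τ_N`, gives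
`τ_{N+1} x_N(a+1, b) = x_{N+1}(a, b+1) τ_N + x_{N+1}(a, 0) x_N(0, b)`.
The first equation is twice the case `(a, b) = (0, 0)`, and the second is six times the sum of the
cases `(1, 0)` and `(0, 1)`.
-/

open Finset Function Matrix

section Algebra

variable {R : Type*} [CommRing R]

theorem cramer_mulVec {n : Type*} [Fintype n] [DecidableEq n] (A : Matrix n n R) (x : n → R) :
    cramer A (A *ᵥ x) = A.det • x := by
  rw [cramer_eq_adjugate_mulVec, mulVec_mulVec, adjugate_mul, smul_mulVec, one_mulVec]

theorem det_smul_cramer_submatrix_castSucc {N : ℕ} (A : Matrix (Fin (N + 1)) (Fin (N + 1)) R)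
    (y : Fin (N + 1) → R) :
    A.det • cramer (A.submatrix Fin.castSucc Fin.castSucc) (y ∘ Fin.castSucc) =
      (A.submatrix Fin.castSucc Fin.castSucc).det • (cramer A y ∘ Fin.castSucc) +
        cramer A y (Fin.last N) •
          cramer (A.submatrix Fin.castSucc Fin.castSucc) (fun i => A i.castSucc (Fin.last N)) := by
  have expansion : A.det • (y ∘ Fin.castSucc) =
      A.submatrix Fin.castSucc Fin.castSucc *ᵥ (cramer A y ∘ Fin.castSucc) +
        cramer A y (Fin.last N) • fun i => A i.castSucc (Fin.last N) := by
    ext i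
    have row := congrFun (mulVec_cramer A y) i.castSucc
    rw [mulVec, dotProduct, Fin.sum_univ_castSucc] at row
    simpa [mulVec, dotProduct, mul_comm] using row.symm
  rw [← map_smul, expansion, map_add, map_smul, cramer_mulVec]

/-- The determinant of the first `M` rows and the columns `c 0, …, c (M - 1)` of the infinite
matrix `f`. -/
def minor (f : ℕ → ℕ → R) {M : ℕ} (c : Fin M → ℕ) : R :=
  (Matrix.of fun i j : Fin M => f i (c j)).det

/-- The tau function: the minor of `f` on its first `M` rows and columns. -/
def tau (f : ℕ → ℕ → R) (M : ℕ) : R :=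
  minor f fun j : Fin M => (j : ℕ)

/-- The minor obtained from `tau f M` by replacing the column `M - 1 - b` by the column `M + a`,
and `0` if there is no such column to replace. Up to the sign `(-1) ^ b` it is the minor attached
to the hook partition `(a + 1, 1, …, 1)` with `b` trailing ones. -/
def hookTau (f : ℕ → ℕ → R) (M a b : ℕ) : R :=
  if hb : b < M then minor f (update (fun j : Fin M => (j : ℕ)) (Fin.rev ⟨b, hb⟩) (M + a)) else 0

variable {M : ℕ}

theorem minor_eq_zero_of_eq (f : ℕ → ℕ → R) {c : Fin M → ℕ} {i j : Fin M} (hij : i ≠ j)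
    (hc : c i = c j) : minor f c = 0 :=
  det_zero_of_column_eq hij fun l => by simp only [of_apply, hc]

theorem minor_comp_swap (f : ℕ → ℕ → R) (c : Fin M → ℕ) {i j : Fin M} (hij : i ≠ j) :
    minor f (c ∘ Equiv.swap i j) = -minor f c := by
  have key := det_permute' (Equiv.swap i j) (Matrix.of fun i j : Fin M => f i (c j))
  rw [Equiv.Perm.sign_swap hij, Units.val_neg, Units.val_one, Int.cast_neg, Int.cast_one,
    neg_one_mul] at key
  exact key

theorem minor_update_update_apply (f : ℕ → ℕ → R) (c : Fin M → ℕ) {l q : Fin M} (hlq : l ≠ q)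
    (n : ℕ) : minor f (update (update c q n) l (c q)) = -minor f (update c l n) := by
  rw [← minor_comp_swap f _ hlq]
  congr 1
  ext j
  simp only [Function.comp_apply, update_apply, Equiv.swap_apply_def]
  split_ifs <;> simp_all

theorem minor_update (f : ℕ → ℕ → R) (c : Fin M → ℕ) (q : Fin M) (n : ℕ) :
    minor f (update c q n) =
      cramer (Matrix.of fun i j : Fin M => f i (c j)) (fun i => f i n) q := by
  rw [cramer_apply, minor]
  congr 1
  ext i j
  simp only [of_apply, update_apply, updateCol_apply, apply_ite (f i)]

theorem tau_succ_mul_minor_update (f : ℕ → ℕ → R) {N : ℕ} (q : Fin N) (n : ℕ) :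
    tau f (N + 1) * minor f (update (fun j : Fin N => (j : ℕ)) q n) =
      minor f (update (fun j : Fin (N + 1) => (j : ℕ)) q.castSucc n) * tau f N +
        minor f (update (fun j : Fin (N + 1) => (j : ℕ)) (Fin.last N) n) *
          minor f (update (fun j : Fin N => (j : ℕ)) q N) := by
  simp only [minor_update]
  rw [mul_comm _ (tau f N)]
  exact congrFun (det_smul_cramer_submatrix_castSucc
    (Matrix.of fun i j : Fin (N + 1) => f i j) fun i => f i n) q

theorem tau_succ_mul_hookTau (f : ℕ → ℕ → R) (N a b : ℕ) :
    tau f (N + 1) * hookTau f N (a + 1) b =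
      hookTau f (N + 1) a (b + 1) * tau f N + hookTau f (N + 1) a 0 * hookTau f N 0 b := by
  by_cases hb : b < N
  · have rev_succ : Fin.rev ⟨b + 1, by omega⟩ = (Fin.rev ⟨b, hb⟩).castSucc := by
      ext; simp
    have rev_zero : Fin.rev ⟨0, by omega⟩ = Fin.last N := by
      ext; simp
    simp only [hookTau, hb, Nat.succ_lt_succ hb, Nat.succ_pos, dif_pos, rev_succ, rev_zero]
    rw [show N + (a + 1) = N + 1 + a by ring]
    exact tau_succ_mul_minor_update f _ _
  · simp [hookTau, hb]

theorem minor_update_add_succ (f : ℕ → ℕ → R) (p : ℕ) (b : Fin M) :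
    minor f (update (fun j : Fin M => (j : ℕ)) b.rev (b.rev + (p + 1))) =
      if b ≤ p then hookTau f M (p - b) b else 0 := by
  have hb := b.isLt
  split_ifs with hbp
  · rw [hookTau, dif_pos hb]
    congr 2
    rw [Fin.val_rev]
    omega
  · have hlt : (b.rev : ℕ) + (p + 1) < M := by rw [Fin.val_rev]; omega
    have hne : b.rev ≠ ⟨b.rev + (p + 1), hlt⟩ := by simp [Fin.ext_iff]
    exact minor_eq_zero_of_eq f hne (by rw [update_self, update_of_ne hne.symm])

theorem sum_minor_update_add_succ (f : ℕ → ℕ → R) (M p : ℕ) :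
    ∑ l : Fin M, minor f (update (fun j : Fin M => (j : ℕ)) l (l + (p + 1))) =
      ∑ ab ∈ antidiagonal p, hookTau f M ab.1 ab.2 := by
  have hookTau_of_le : ∀ b ∈ range (p + 1), b ∉ range M → hookTau f M (p - b) b = 0 := by
    intro b _ hb
    exact dif_neg (by simpa using hb)
  calc ∑ l : Fin M, minor f (update (fun j : Fin M => (j : ℕ)) l (l + (p + 1)))
      = ∑ b : Fin M, if b ≤ p then hookTau f M (p - b) b else 0 := by
        rw [← Equiv.sum_comp Fin.revPerm]
        exact sum_congr rfl fun b _ => minor_update_add_succ f p b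
    _ = ∑ b ∈ range M with b ≤ p, hookTau f M (p - b) b := by
        rw [Fin.sum_univ_eq_sum_range (fun b => if b ≤ p then hookTau f M (p - b) b else 0),
          sum_filter]
    _ = ∑ b ∈ range (p + 1), hookTau f M (p - b) b := by
        refine sum_subset (fun b hb => ?_) fun b hb hb' => hookTau_of_le b hb fun hM => hb' ?_
        · simp only [mem_filter, mem_range] at hb ⊢; omega
        · simp only [mem_filter, mem_range] at hb hM ⊢; omega
    _ = ∑ ab ∈ antidiagonal p, hookTau f M ab.1 ab.2 := by
        rw [← Nat.sum_antidiagonal_swap]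
        exact (Nat.sum_antidiagonal_eq_sum_range_succ_mk
          (fun ab : ℕ × ℕ => hookTau f M ab.2 ab.1) p).symm

theorem minor_update_update_add_eq_zero (f : ℕ → ℕ → R) {p a : ℕ} {l q : Fin M} (hp : 0 < p)
    (hlq : l ≠ q) (hshift : (l : ℕ) + p ≠ q) (hmax : M ≤ l + p → l + p = M + a) :
    minor f (update (update (fun j : Fin M => (j : ℕ)) q (M + a)) l (l + p)) = 0 := by
  by_cases hlt : (l : ℕ) + p < M
  · have hl : (⟨l + p, hlt⟩ : Fin M) ≠ l := by simp [Fin.ext_iff, hp.ne']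
    have hq : (⟨l + p, hlt⟩ : Fin M) ≠ q := by simpa [Fin.ext_iff] using hshift
    exact minor_eq_zero_of_eq f hl (by simp [update_of_ne hl, update_of_ne hq])
  · exact minor_eq_zero_of_eq f hlq (by simp [update_of_ne hlq.symm, hmax (by omega)])

/-- By `hmax`, a column that the shift moves past the first `M` lands on the column `M + a`, so no
minors with two new columns remain. -/
theorem sum_minor_update_update_add (f : ℕ → ℕ → R) {p a b : ℕ} (hp : 0 < p) (hb : b < M)
    (hmax : ∀ d < p, d ≠ b → a + d + 1 = p) :
    ∑ l ∈ univ.erase (Fin.rev ⟨b, hb⟩),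
        minor f (update (update (fun j : Fin M => (j : ℕ)) (Fin.rev ⟨b, hb⟩) (M + a)) l (l + p)) =
      -hookTau f M a (b + p) := by
  set q := Fin.rev ⟨b, hb⟩ with hq
  have q_val : (q : ℕ) = M - (b + 1) := by simp [hq]
  have vanish : ∀ l ≠ q, (l : ℕ) + p ≠ q →
      minor f (update (update (fun j : Fin M => (j : ℕ)) q (M + a)) l (l + p)) = 0 := by
    intro l hlq hshift
    refine minor_update_update_add_eq_zero f hp hlq hshift fun hle => ?_
    have := hmax (M - 1 - l) (by omega) (by have := Fin.val_ne_of_ne hlq; omega)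
    omega
  by_cases hbp : b + p < M
  · have r_add : ((Fin.rev ⟨b + p, hbp⟩ : Fin M) : ℕ) + p = q := by
      rw [q_val, Fin.val_rev]; dsimp only; omega
    have hrq : Fin.rev ⟨b + p, hbp⟩ ≠ q := Fin.ne_of_val_ne (by omega)
    rw [sum_eq_single_of_mem _ (mem_erase.2 ⟨hrq, mem_univ _⟩) fun l hl hlr =>
      vanish l (ne_of_mem_erase hl) fun h => hlr (Fin.ext (by omega)), r_add,
      minor_update_update_apply f _ hrq, hookTau, dif_pos hbp]
  · rw [hookTau, dif_neg hbp, neg_zero]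
    exact sum_eq_zero fun l hl => vanish l (ne_of_mem_erase hl) (by omega)

end Algebra

section Flow

variable {𝕜 R : Type*} [NontriviallyNormedField 𝕜] [NormedCommRing R] [NormedAlgebra 𝕜 R]

theorem hasDerivAt_det {n : Type*} [Fintype n] [DecidableEq n] {A : 𝕜 → Matrix n n R}
    {A' : Matrix n n R} {t : 𝕜} (hA : ∀ i j, HasDerivAt (fun s => A s i j) (A' i j) t) :
    HasDerivAt (fun s => (A s).det) (∑ l, ((A t).updateCol l fun i => A' i l).det) t := by
  simp only [det_apply]
  rw [sum_comm]
  refine HasDerivAt.fun_sum fun σ _ => ?_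
  rw [← smul_sum]
  refine HasDerivAt.const_smul _ ((HasDerivAt.fun_finsetProd fun j _ => hA (σ j) j).congr_deriv ?_)
  refine sum_congr rfl fun l _ => ?_
  rw [← prod_erase_mul univ _ (mem_univ l), updateCol_self, smul_eq_mul]
  congr 1
  exact prod_congr rfl fun j hj => (updateCol_ne (ne_of_mem_erase hj)).symm

/-- The entries of the infinite matrix `f t` evolve so that differentiating in `t` moves each
column `p` places to the right, as for the `p`-th time of the hierarchy. -/
def IsShiftFlow (p : ℕ) (f : 𝕜 → ℕ → ℕ → R) : Prop :=
  ∀ t i n, HasDerivAt (fun s => f s i n) (f t i (n + p)) t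

namespace IsShiftFlow

variable {f : 𝕜 → ℕ → ℕ → R}

theorem hasDerivAt_minor {p : ℕ} (hf : IsShiftFlow p f) {M : ℕ} (c : Fin M → ℕ) (t : 𝕜) :
    HasDerivAt (fun s => minor (f s) c) (∑ l, minor (f t) (update c l (c l + p))) t := by
  simp only [minor_update, cramer_apply]
  exact hasDerivAt_det (A' := Matrix.of fun i j : Fin M => f t i (c j + p)) fun i j => hf t i (c j)

theorem hasDerivAt_tau {p : ℕ} (hf : IsShiftFlow (p + 1) f) (M : ℕ) (t : 𝕜) :
    HasDerivAt (fun s => tau (f s) M) (∑ ab ∈ antidiagonal p, hookTau (f t) M ab.1 ab.2) t :=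
  (hf.hasDerivAt_minor _ t).congr_deriv (sum_minor_update_add_succ (f t) M p)

theorem hasDerivAt_hookTau {p a b : ℕ} (hf : IsShiftFlow p f) (hp : 0 < p)
    (hmax : ∀ d < p, d ≠ b → a + d + 1 = p) (M : ℕ) (t : 𝕜) :
    HasDerivAt (fun s => hookTau (f s) M a b)
      (hookTau (f t) M (a + p) b - hookTau (f t) M a (b + p)) t := by
  by_cases hb : b < M
  · rw [sub_eq_add_neg, ← sum_minor_update_update_add (f t) hp hb hmax]
    simp only [hookTau, dif_pos hb]
    refine (hf.hasDerivAt_minor _ t).congr_deriv ?_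
    rw [← add_sum_erase univ _ (mem_univ (Fin.rev ⟨b, hb⟩)), update_self, update_idem, add_assoc]
    congr 1
    exact sum_congr rfl fun l hl => by rw [update_of_ne (ne_of_mem_erase hl)]
  · have hbp : ¬b + p < M := by omega
    simpa only [hookTau, dif_neg hb, dif_neg hbp, sub_zero] using hasDerivAt_const t (0 : R)

theorem deriv_tau_one (hf : IsShiftFlow 1 f) (M : ℕ) (t : 𝕜) :
    deriv (fun s => tau (f s) M) t = hookTau (f t) M 0 0 := by
  simpa using (hf.hasDerivAt_tau (p := 0) M t).deriv

theorem deriv_hookTau_one (hf : IsShiftFlow 1 f) (M : ℕ) (t : 𝕜) :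
    deriv (fun s => hookTau (f s) M 0 0) t = hookTau (f t) M 1 0 - hookTau (f t) M 0 1 := by
  simpa using (hf.hasDerivAt_hookTau one_pos (by omega) M t).deriv

theorem deriv_hookTau_sub_hookTau_one (hf : IsShiftFlow 1 f) (M : ℕ) (t : 𝕜) :
    deriv (fun s => hookTau (f s) M 1 0 - hookTau (f s) M 0 1) t =
      hookTau (f t) M 2 0 - 2 * hookTau (f t) M 1 1 + hookTau (f t) M 0 2 := by
  rw [((hf.hasDerivAt_hookTau one_pos (by omega) M t).fun_sub
    (hf.hasDerivAt_hookTau one_pos (by omega) M t)).deriv]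
  ring

theorem deriv_tau_two (hf : IsShiftFlow 2 f) (M : ℕ) (t : 𝕜) :
    deriv (fun s => tau (f s) M) t = hookTau (f t) M 1 0 + hookTau (f t) M 0 1 := by
  rw [(hf.hasDerivAt_tau (p := 1) M t).deriv]
  simp [Nat.antidiagonal_succ, add_comm]

theorem deriv_hookTau_two (hf : IsShiftFlow 2 f) (M : ℕ) (t : 𝕜) :
    deriv (fun s => hookTau (f s) M 0 0) t = hookTau (f t) M 2 0 - hookTau (f t) M 0 2 := by
  simpa using (hf.hasDerivAt_hookTau two_pos (by omega) M t).deriv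

theorem deriv_tau_three (hf : IsShiftFlow 3 f) (M : ℕ) (t : 𝕜) :
    deriv (fun s => tau (f s) M) t =
      hookTau (f t) M 2 0 + hookTau (f t) M 1 1 + hookTau (f t) M 0 2 := by
  rw [(hf.hasDerivAt_tau (p := 2) M t).deriv]
  simp [Nat.antidiagonal_succ, add_comm, add_left_comm]

end IsShiftFlow

end Flow

theorem stmt_13_general {𝕜 R : Type*} [NontriviallyNormedField 𝕜] [NormedCommRing R]
    [NormedAlgebra 𝕜 R] (g : ℤ → ℤ → 𝕜 → 𝕜 → 𝕜 → R)
    (hgu : ∀ i n u v w, HasDerivAt (fun u' => g i n u' v w) (g i (n + 1) u v w) u)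
    (hgv : ∀ i n u v w, HasDerivAt (fun v' => g i n u v' w) (g i (n + 2) u v w) v)
    (hgw : ∀ i n u v w, HasDerivAt (fun w' => g i n u v w') (g i (n + 3) u v w) w)
    (h : ℕ → ℤ → 𝕜 → 𝕜 → 𝕜 → R)
    (hh : ∀ M m u v w, h M m u v w =
      Matrix.det (Matrix.of fun i j : Fin M => g ((i.val : ℤ) + 1) (m + (j.val : ℤ)) u v w))
    (N : ℕ) (k : ℤ) :
    (∀ u v w,
      deriv (fun u' => deriv (fun u'' => h (N + 1) k u'' v w) u') u * h N k u v w
        - 2 * deriv (fun u' => h (N + 1) k u' v w) u * deriv (fun u' => h N k u' v w) u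
        + h (N + 1) k u v w * deriv (fun u' => deriv (fun u'' => h N k u'' v w) u') u
        - (deriv (fun v' => h (N + 1) k u v' w) v * h N k u v w
            - h (N + 1) k u v w * deriv (fun v' => h N k u v' w) v)
      = 0) ∧
    (∀ u v w,
      (deriv (fun u' => deriv (fun u'' => deriv (fun s => h (N + 1) k s v w) u'') u') u
          * h N k u v w
        - 3 * deriv (fun u' => deriv (fun u'' => h (N + 1) k u'' v w) u') u
            * deriv (fun u' => h N k u' v w) u
        + 3 * deriv (fun u' => h (N + 1) k u' v w) u
            * deriv (fun u' => deriv (fun u'' => h N k u'' v w) u') u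
        - h (N + 1) k u v w
            * deriv (fun u' => deriv (fun u'' => deriv (fun s => h N k s v w) u'') u') u)
      - 4 * (deriv (fun w' => h (N + 1) k u v w') w * h N k u v w
          - h (N + 1) k u v w * deriv (fun w' => h N k u v w') w)
      + 3 * (deriv (fun v' => deriv (fun u' => h (N + 1) k u' v' w) u) v * h N k u v w
          - deriv (fun u' => h (N + 1) k u' v w) u * deriv (fun v' => h N k u v' w) v
          - deriv (fun v' => h (N + 1) k u v' w) v * deriv (fun u' => h N k u' v w) u
          + h (N + 1) k u v w * deriv (fun v' => deriv (fun u' => h N k u' v' w) u) v)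
      = 0) := by
  let F (u v w : 𝕜) (i n : ℕ) : R := g (i + 1) (k + n) u v w
  have flow_u (v w : 𝕜) : IsShiftFlow 1 fun u => F u v w := fun u i n => by
    simpa [F, add_assoc] using hgu (i + 1) (k + n) u v w
  have flow_v (u w : 𝕜) : IsShiftFlow 2 fun v => F u v w := fun v i n => by
    simpa [F, add_assoc] using hgv (i + 1) (k + n) u v w
  have flow_w (u v : 𝕜) : IsShiftFlow 3 fun w => F u v w := fun w i n => by
    simpa [F, add_assoc] using hgw (i + 1) (k + n) u v w
  have h_eq (M : ℕ) (u v w : 𝕜) : h M k u v w = tau (F u v w) M := hh M k u v w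
  simp only [h_eq, (flow_u _ _).deriv_tau_one, (flow_u _ _).deriv_hookTau_one,
    (flow_u _ _).deriv_hookTau_sub_hookTau_one, (flow_v _ _).deriv_tau_two,
    (flow_v _ _).deriv_hookTau_two, (flow_w _ _).deriv_tau_three]
  refine ⟨fun u v w => ?_, fun u v w => ?_⟩
  · linear_combination 2 * tau_succ_mul_hookTau (F u v w) N 0 0
  · linear_combination 6 * tau_succ_mul_hookTau (F u v w) N 1 0 +
      6 * tau_succ_mul_hookTau (F u v w) N 0 1

/-- For smooth functions `g_n^{(i)}(u,v,w)` with `∂_u g_n = g_{n+1}`,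
`∂_v g_n = g_{n+2}`, `∂_w g_n = g_{n+3}`, the determinants
`h_N(k) = det[g^{(i)}_{k+j-1}]` satisfy the mKP hierarchy bilinear equations
`(D_u² - D_v) h_{N+1}(k)·h_N(k) = 0` and
`(D_u³ - 4D_w + 3D_u D_v) h_{N+1}(k)·h_N(k) = 0`. -/
theorem stmt_13 (g : ℤ → ℤ → ℝ → ℝ → ℝ → ℝ)
    (hsm : ∀ i n, ContDiff ℝ (⊤ : ℕ∞) (fun q : ℝ × ℝ × ℝ => g i n q.1 q.2.1 q.2.2))
    (hgu : ∀ i n u v w, deriv (fun u' => g i n u' v w) u = g i (n + 1) u v w)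
    (hgv : ∀ i n u v w, deriv (fun v' => g i n u v' w) v = g i (n + 2) u v w)
    (hgw : ∀ i n u v w, deriv (fun w' => g i n u v w') w = g i (n + 3) u v w)
    (h : ℕ → ℤ → ℝ → ℝ → ℝ → ℝ)
    (hh : ∀ M m u v w, h M m u v w =
      Matrix.det (Matrix.of fun i j : Fin M => g ((i.val : ℤ) + 1) (m + (j.val : ℤ)) u v w))
    (N : ℕ) (hN : 0 < N) (k : ℤ) :
    (∀ u v w,
      deriv (fun u' => deriv (fun u'' => h (N + 1) k u'' v w) u') u * h N k u v w
        - 2 * deriv (fun u' => h (N + 1) k u' v w) u * deriv (fun u' => h N k u' v w) u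
        + h (N + 1) k u v w * deriv (fun u' => deriv (fun u'' => h N k u'' v w) u') u
        - (deriv (fun v' => h (N + 1) k u v' w) v * h N k u v w
            - h (N + 1) k u v w * deriv (fun v' => h N k u v' w) v)
      = 0) ∧
    (∀ u v w,
      (deriv (fun u' => deriv (fun u'' => deriv (fun s => h (N + 1) k s v w) u'') u') u
          * h N k u v w
        - 3 * deriv (fun u' => deriv (fun u'' => h (N + 1) k u'' v w) u') u
            * deriv (fun u' => h N k u' v w) u
        + 3 * deriv (fun u' => h (N + 1) k u' v w) u
            * deriv (fun u' => deriv (fun u'' => h N k u'' v w) u') u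
        - h (N + 1) k u v w
            * deriv (fun u' => deriv (fun u'' => deriv (fun s => h N k s v w) u'') u') u)
      - 4 * (deriv (fun w' => h (N + 1) k u v w') w * h N k u v w
          - h (N + 1) k u v w * deriv (fun w' => h N k u v w') w)
      + 3 * (deriv (fun v' => deriv (fun u' => h (N + 1) k u' v' w) u) v * h N k u v w
          - deriv (fun u' => h (N + 1) k u' v w) u * deriv (fun v' => h N k u v' w) v
          - deriv (fun v' => h (N + 1) k u v' w) v * deriv (fun u' => h N k u' v w) u
          + h (N + 1) k u v w * deriv (fun v' => deriv (fun u' => h N k u' v' w) u) v)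
      = 0) := by
  have smooth i n := (hsm i n).differentiable (by simp)
  exact stmt_13_general g
    (fun i n u v w => hgu i n u v w ▸
      ((smooth i n).comp (f := fun t => (t, v, w)) (by fun_prop) u).hasDerivAt)
    (fun i n u v w => hgv i n u v w ▸
      ((smooth i n).comp (f := fun t => (u, t, w)) (by fun_prop) v).hasDerivAt)
    (fun i n u v w => hgw i n u v w ▸
      ((smooth i n).comp (f := fun t => (u, v, t)) (by fun_prop) w).hasDerivAt)
    h hh N k
end

section
/- Let N be a positive integer, k an integer, and for i = 1,…,N+1 let α_i, β_i, p_i be real parameters with 0 < p_1 < p_2 < ⋯ < p_{N+1}, α_i > 0, and sgn β_i = (−1)^{k+i−1} for all i. Set a = p_{N+1}^{−2} and define f_n^{(i)}(x,t) = α_i p_i^n e^{η_i} + β_i (−p_i)^n e^{−η_i} with η_i = p_i x + 4 p_i³ (1 − (3/2) a p_i²) t. Then ρ_N(k)(x,t) > 0 and ρ_{N+1}(k)(x,t) > 0 for all (x,t) ∈ ℝ²; consequently θ = 2 log( ρ_N(k)/ρ_{N+1}(k) ) is a smooth function on all of ℝ². -/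
/-!
Expanding `ρ_M(k)` multilinearly in its rows gives `2 ^ M` terms, each a generalized Vandermonde
determinant with rows `c_i v_i ^ (k + j)`, where `v_i = ± p_i`. Since `|v_i|` is strictly
increasing, each Vandermonde factor `v_j - v_i` with `i < j` has the sign of `v_j`. The term
therefore has the sign of `∏_j c_j v_j ^ (k + j)` with `j` counted from `0`, and the condition on
`sgn β_j` says precisely that all these factors are positive.
-/

open Finset Matrix

section Casoratian

variable {R : Type*} [CommRing R] {M : ℕ}

/-- The Casoratian `det [f⁽ⁱ⁾_{k+j}]` of `M` sequences starting at `k`, the discrete analogue of the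
Wronskian; with indices from `0`, it is the paper's `ρ_M(k)`. -/
def casoratian (f : Fin M → ℤ → R) (k : ℤ) : R :=
  det (of fun i j : Fin M => f i (k + (j : ℤ)))

lemma casoratian_add (f g : Fin M → ℤ → R) (k : ℤ) :
    casoratian (f + g) k = ∑ s : Finset (Fin M), casoratian (s.piecewise f g) k := by
  have expansion := (detRowAlternating (n := Fin M) (R := R)).map_add_univ
    (fun i j => f i (k + (j : ℤ))) (fun i j => g i (k + (j : ℤ)))
  refine expansion.trans (sum_congr rfl fun s _ => congrArg det ?_)
  ext i j
  by_cases hi : i ∈ s <;> simp [hi]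

end Casoratian

lemma det_vandermonde_eq_prod_Iio {R : Type*} [CommRing R] {M : ℕ} (v : Fin M → R) :
    det (vandermonde v) = ∏ j, ∏ i ∈ Iio j, (v j - v i) := by
  rw [det_vandermonde]
  exact prod_comm' (by simp)

lemma casoratian_mul_zpow {K : Type*} [Field K] {M : ℕ} (c : Fin M → K) {v : Fin M → K}
    (hv : ∀ i, v i ≠ 0) (k : ℤ) :
    casoratian (fun i n => c i * v i ^ n) k = (∏ i, c i * v i ^ k) * det (vandermonde v) := by
  rw [casoratian, ← det_mul_column]
  congr! 4 with i j
  rw [vandermonde_apply, zpow_add₀ (hv i), zpow_natCast, mul_assoc]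

section SignOfVandermondeFactors

variable {R : Type*} [CommRing R] [LinearOrder R] [IsStrictOrderedRing R]

lemma mul_sub_pos_of_abs_lt_abs {a b : R} (h : |a| < |b|) : 0 < b * (b - a) := by
  have hb : 0 < |b| := (abs_nonneg a).trans_lt h
  calc 0 < |b| * (|b| - |a|) := mul_pos hb (sub_pos.2 h)
    _ = b * b - |b * a| := by rw [mul_sub, abs_mul_abs_self, abs_mul]
    _ ≤ b * (b - a) := by rw [mul_sub]; gcongr; exact le_abs_self _

lemma pow_mul_prod_Iio_sub_pos {M : ℕ} {v : Fin M → R} (hv : StrictMono fun i => |v i|)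
    (j : Fin M) : 0 < v j ^ (j : ℕ) * ∏ i ∈ Iio j, (v j - v i) := by
  rw [← Fin.card_Iio j, ← prod_const, ← prod_mul_distrib]
  exact prod_pos fun i hi => mul_sub_pos_of_abs_lt_abs (hv (mem_Iio.1 hi))

end SignOfVandermondeFactors

section Positivity

variable {K : Type*} [Field K] [LinearOrder K] [IsStrictOrderedRing K] {M : ℕ}

lemma casoratian_mul_zpow_pos {c v : Fin M → K} {k : ℤ} (hv₀ : ∀ i, v i ≠ 0)
    (hv : StrictMono fun i => |v i|) (hc : ∀ i, 0 < c i * v i ^ (k + (i : ℤ))) :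
    0 < casoratian (fun i n => c i * v i ^ n) k := by
  rw [casoratian_mul_zpow c hv₀, det_vandermonde_eq_prod_Iio, ← prod_mul_distrib]
  refine prod_pos fun j _ => ?_
  have hpow : 0 < (v j ^ (j : ℕ)) ^ 2 := sq_pos_of_ne_zero (pow_ne_zero _ (hv₀ j))
  have hprod := mul_pos (hc j) (pow_mul_prod_Iio_sub_pos hv j)
  rw [zpow_add₀ (hv₀ j), zpow_natCast] at hprod
  refine pos_of_mul_pos_left ?_ hpow.le
  convert hprod using 1
  ring

lemma casoratian_mul_zpow_add_mul_neg_zpow_pos {a b p : Fin M → K} {k : ℤ} (hp₀ : ∀ i, p i ≠ 0)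
    (hp : StrictMono fun i => |p i|) (ha : ∀ i, 0 < a i * p i ^ (k + (i : ℤ)))
    (hb : ∀ i, 0 < b i * (-p i) ^ (k + (i : ℤ))) :
    0 < casoratian (fun i n => a i * p i ^ n + b i * (-p i) ^ n) k := by
  change 0 < casoratian ((fun i (n : ℤ) => a i * p i ^ n) + fun i (n : ℤ) => b i * (-p i) ^ n) k
  rw [casoratian_add]
  refine sum_pos (fun s _ => ?_) univ_nonempty
  have geometric : s.piecewise (fun i n => a i * p i ^ n) (fun i n => b i * (-p i) ^ n) =
      fun i (n : ℤ) => s.piecewise a b i * s.piecewise p (-p) i ^ n := by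
    ext i n
    by_cases hi : i ∈ s <;> simp [hi]
  have abs_piecewise (i : Fin M) : |s.piecewise p (-p) i| = |p i| := by
    by_cases hi : i ∈ s <;> simp [hi]
  rw [geometric]
  refine casoratian_mul_zpow_pos (fun i => ?_) (by simpa only [abs_piecewise] using hp)
    fun i => ?_
  · rw [← abs_pos, abs_piecewise, abs_pos]
    exact hp₀ i
  · by_cases hi : i ∈ s
    · simpa [hi] using ha i
    · simpa [hi] using hb i

end Positivity

section Smoothness

variable {𝕜 E A ι : Type*} [NontriviallyNormedField 𝕜] [NormedAddCommGroup E] [NormedSpace 𝕜 E]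
  [NormedCommRing A] [NormedAlgebra 𝕜 A] {n : WithTop ℕ∞}

lemma contDiff_det [Fintype ι] [DecidableEq ι] {F : E → Matrix ι ι A}
    (hF : ∀ i j, ContDiff 𝕜 n fun x => F x i j) : ContDiff 𝕜 n fun x => (F x).det := by
  simp only [det_apply']
  exact ContDiff.sum fun σ _ => contDiff_const.mul (contDiff_prod fun i _ => hF (σ i) i)

lemma contDiff_casoratian {M : ℕ} {f : Fin M → ℤ → E → A} (hf : ∀ i m, ContDiff 𝕜 n (f i m))
    (k : ℤ) : ContDiff 𝕜 n fun x => casoratian (fun i m => f i m x) k :=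
  contDiff_det fun i j => hf i (k + (j : ℤ))

end Smoothness

/-- The seed sequence `n ↦ f_n = α pⁿ e^η + β (-p)ⁿ e^{-η}` of the determinants `ρ_M`, at a point
where the phase takes the value `η`. -/
noncomputable def seed (α β p η : ℝ) (n : ℤ) : ℝ :=
  α * p ^ n * Real.exp η + β * (-p) ^ n * Real.exp (-η)

lemma mul_neg_zpow_pos_of_sign_eq {b q : ℝ} {m : ℤ} (hq : 0 < q)
    (hb : Real.sign b = (-1) ^ m) : 0 < b * (-q) ^ m := by
  have hb₀ : b ≠ 0 := by
    rintro rfl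
    exact zpow_ne_zero m (by norm_num) (hb.symm.trans Real.sign_zero)
  calc 0 < Real.sign b * b * q ^ m :=
        mul_pos (Real.sign_mul_pos_of_ne_zero b hb₀) (zpow_pos hq m)
    _ = b * (-q) ^ m := by rw [hb, neg_eq_neg_one_mul q, mul_zpow]; ring

lemma casoratian_seed_pos {M : ℕ} {k : ℤ} {α β p : Fin M → ℝ} (hp : StrictMono p)
    (hp₀ : ∀ i, 0 < p i) (hα : ∀ i, 0 < α i)
    (hβ : ∀ i, Real.sign (β i) = (-1) ^ (k + (i : ℤ))) (η : Fin M → ℝ) :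
    0 < casoratian (fun i => seed (α i) (β i) (p i) (η i)) k := by
  have seed_eq (i : Fin M) : seed (α i) (β i) (p i) (η i) = fun n =>
      α i * Real.exp (η i) * p i ^ n + β i * Real.exp (-η i) * (-p i) ^ n := by
    ext n
    rw [seed, mul_right_comm, mul_right_comm (β i)]
  simp only [seed_eq]
  refine casoratian_mul_zpow_add_mul_neg_zpow_pos (fun i => (hp₀ i).ne')
    (by simpa only [abs_of_pos (hp₀ _)] using hp) (fun i => ?_) (fun i => ?_)
  · exact mul_pos (mul_pos (hα i) (Real.exp_pos _)) (zpow_pos (hp₀ i) _)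
  · rw [mul_right_comm]
    exact mul_pos (mul_neg_zpow_pos_of_sign_eq (hp₀ i) (hβ i)) (Real.exp_pos _)

section General

variable {E : Type*} [NormedAddCommGroup E] [NormedSpace ℝ E] {n : WithTop ℕ∞}

lemma contDiff_seed (α β p : ℝ) (m : ℤ) {η : E → ℝ} (hη : ContDiff ℝ n η) :
    ContDiff ℝ n fun x => seed α β p (η x) m := by
  unfold seed
  fun_prop

theorem stmt_16_general {N : ℕ} {k : ℤ} {α β p : Fin (N + 1) → ℝ} (hp : StrictMono p)
    (hp₀ : ∀ i, 0 < p i) (hα : ∀ i, 0 < α i)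
    (hβ : ∀ i, Real.sign (β i) = (-1) ^ (k + (i : ℤ)))
    {η : Fin (N + 1) → E → ℝ} (hη : ∀ i, ContDiff ℝ n (η i))
    {ρN ρN1 : E → ℝ}
    (hρN : ∀ x, ρN x = casoratian (fun i : Fin N =>
      seed (α i.castSucc) (β i.castSucc) (p i.castSucc) (η i.castSucc x)) k)
    (hρN1 : ∀ x, ρN1 x = casoratian (fun i => seed (α i) (β i) (p i) (η i x)) k) :
    (∀ x, 0 < ρN x ∧ 0 < ρN1 x) ∧ ContDiff ℝ n fun x => 2 * Real.log (ρN x / ρN1 x) := by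
  have hN (x : E) : 0 < ρN x := hρN x ▸
    casoratian_seed_pos (hp.comp Fin.strictMono_castSucc) (fun i => hp₀ i.castSucc)
      (fun i => hα i.castSucc) (fun i => hβ i.castSucc) fun i => η i.castSucc x
  have hN1 (x : E) : 0 < ρN1 x := hρN1 x ▸ casoratian_seed_pos hp hp₀ hα hβ fun i => η i x
  have hN_smooth : ContDiff ℝ n ρN := funext hρN ▸
    contDiff_casoratian (fun i m => contDiff_seed _ _ _ m (hη i.castSucc)) k
  have hN1_smooth : ContDiff ℝ n ρN1 := funext hρN1 ▸
    contDiff_casoratian (fun i m => contDiff_seed _ _ _ m (hη i)) k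
  exact ⟨fun x => ⟨hN x, hN1 x⟩, contDiff_const.mul
    ((hN_smooth.div hN1_smooth fun x => (hN1 x).ne').log fun x => (div_pos (hN x) (hN1 x)).ne')⟩

end General

/-- Under the parameter conditions `0 < p_1 < ⋯ < p_{N+1}`, `α_i > 0`,
`sgn β_i = (-1)^{k+i-1}`, with `a = p_{N+1}^{-2}` and
`f_n^{(i)} = α_i p_i^n e^{η_i} + β_i (-p_i)^n e^{-η_i}`,
`η_i = p_i x + 4p_i³(1 - (3/2)a p_i²) t`, the determinants `ρ_N(k)` and `ρ_{N+1}(k)`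
are everywhere positive; consequently `θ = 2 log(ρ_N(k)/ρ_{N+1}(k))` is a smooth
function on all of `ℝ²`. -/
theorem stmt_16 (N : ℕ) (hNpos : 0 < N) (k : ℤ) (α β p : Fin (N + 1) → ℝ)
    (hpmono : StrictMono p) (hppos : ∀ i, 0 < p i)
    (hα : ∀ i, 0 < α i)
    (hβ : ∀ i, Real.sign (β i) = (-1 : ℝ) ^ (k + (i.val : ℤ)))
    (a : ℝ) (ha : a = (p (Fin.last N))⁻¹ ^ 2)
    (f : Fin (N + 1) → ℤ → ℝ → ℝ → ℝ)
    (hf : ∀ i n x t, f i n x t =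
      α i * p i ^ n *
        Real.exp (p i * x + 4 * p i ^ 3 * (1 - (3 / 2) * a * p i ^ 2) * t)
        + β i * (-p i) ^ n *
            Real.exp (-(p i * x + 4 * p i ^ 3 * (1 - (3 / 2) * a * p i ^ 2) * t)))
    (ρN ρN1 : ℤ → ℝ → ℝ → ℝ)
    (hρN : ∀ m x t, ρN m x t =
      Matrix.det (Matrix.of fun i j : Fin N => f (Fin.castSucc i) (m + (j.val : ℤ)) x t))
    (hρN1 : ∀ m x t, ρN1 m x t =
      Matrix.det (Matrix.of fun i j : Fin (N + 1) => f i (m + (j.val : ℤ)) x t))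
    (θ : ℝ → ℝ → ℝ)
    (hθ : ∀ x t, θ x t = 2 * Real.log (ρN k x t / ρN1 k x t)) :
    (∀ x t, 0 < ρN k x t ∧ 0 < ρN1 k x t) ∧
    ContDiff ℝ (⊤ : ℕ∞) (fun q : ℝ × ℝ => θ q.1 q.2) := by
  have main := stmt_16_general (E := ℝ × ℝ) (n := (⊤ : ℕ∞)) hpmono hppos hα hβ
    (η := fun i q => p i * q.1 + 4 * p i ^ 3 * (1 - (3 / 2) * a * p i ^ 2) * q.2)
    (fun i => by fun_prop) (fun _ => rfl) (fun _ => rfl)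
  simp only [hθ, hρN, hρN1, hf]
  exact ⟨fun x t => main.1 (x, t), main.2⟩
end
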